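/- arXiv:1906.10494 — 2 statements merged into one kernel-verified Lean document; each statement's English description precedes it below -/
import Mathlib

section
/- SCC dichotomy: there exists a polynomial q with natural-number coefficients such that for every 2-VASS V with n control states and norm M, every strongly connected component S of V satisfies at least one of: (a) every control state in S lies on a cycle within S whose effect is positive and whose length is at most q(nM); or (b) there exists a closed half-plane H ⊆ ℚ² containing no positive vector such that the effect of every cycle within S belongs to H. -/
/-- Integer vectors in the plane. -/
abbrev Vec2 : Type := ℤ × ℤ

/-- The norm of a vector: the maximum of the absolute values of its coordinates. -/
def vnorm (v : Vec2) : ℕ := max v.1.natAbs v.2.natAbs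

/-- A vector is positive if both coordinates are positive. -/
def Pos (v : Vec2) : Prop := 0 < v.1 ∧ 0 < v.2

/-- A vector is semi-positive if both coordinates are nonnegative and one is positive. -/
def SemiPos (v : Vec2) : Prop := 0 ≤ v.1 ∧ 0 ≤ v.2 ∧ (0 < v.1 ∨ 0 < v.2)

/-- A vector is vertical if it is of the form (0, a) with a > 0. -/
def Vert (v : Vec2) : Prop := v.1 = 0 ∧ 0 < v.2

/-- A vector is horizontal if it is of the form (a, 0) with a > 0. -/
def Horiz (v : Vec2) : Prop := 0 < v.1 ∧ v.2 = 0

/-- Embedding of integer vectors into the rational plane. -/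
def toQ (v : Vec2) : ℚ × ℚ := ((v.1 : ℚ), (v.2 : ℚ))

/-- The half-line (ray) ℚ≥0 · x generated by a rational vector x. -/
def rayQ (x : ℚ × ℚ) : Set (ℚ × ℚ) := {z | ∃ a : ℚ, 0 ≤ a ∧ z = a • x}

/-- The cone of a finite list of integer vectors: all nonnegative rational
linear combinations. -/
def Cone (vs : List Vec2) : Set (ℚ × ℚ) :=
  {x | ∃ a : Fin vs.length → ℚ, (∀ i, 0 ≤ a i) ∧ x = ∑ i, a i • toQ (vs.get i)}

/-- The sequential cone: nonnegative rational combinations all of whose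
partial sums are in the nonnegative orthant. -/
def SeqCone (vs : List Vec2) : Set (ℚ × ℚ) :=
  {x | ∃ a : Fin vs.length → ℚ, (∀ i, 0 ≤ a i) ∧
    (∀ k : ℕ, k ≤ vs.length →
      0 ≤ ∑ i : Fin vs.length, if (i : ℕ) < k then a i • toQ (vs.get i) else 0) ∧
    x = ∑ i, a i • toQ (vs.get i)}

/-- Two integer vectors are colinear if they generate the same half-line. -/
def Colinear (v w : Vec2) : Prop := rayQ (toQ v) = rayQ (toQ w)

/-- The clockwise relation on nonnegative vectors:
`Clk v u` iff u lies strictly clockwise from v. -/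
def Clk (v u : Vec2) : Prop := 0 < v.2 * u.1 - v.1 * u.2

/-- Projection of a vector on coordinate `j` (`Fin 2` indexes the two coordinates). -/
def proj (j : Fin 2) (v : Vec2) : ℤ := if j = 0 then v.1 else v.2

/-! ### 2-dimensional vector addition systems with states (2-VASS) -/

/-- A transition of a 2-VASS with control states `Fin n`:
a source state, an effect vector, and a target state. -/
abbrev Transition (n : ℕ) : Type := Fin n × Vec2 × Fin n

/-- A 2-VASS with control states `Fin n` is a finite set of transitions. -/
abbrev VASS (n : ℕ) : Type := Finset (Transition n)

/-- The norm of a 2-VASS: the largest norm of an effect of a transition. -/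
def vassNorm {n : ℕ} (V : VASS n) : ℕ := V.sup (fun t => vnorm t.2.1)

/-- The effect of a sequence of transitions: the sum of the individual effects. -/
def effect {n : ℕ} (π : List (Transition n)) : Vec2 := (π.map (fun t => t.2.1)).sum

/-- A path of `V`: a sequence of transitions of `V` in which
consecutive control states match. -/
def IsPath {n : ℕ} (V : VASS n) (π : List (Transition n)) : Prop :=
  (∀ t ∈ π, t ∈ V) ∧ π.Chain' (fun s t => s.2.2 = t.1)

/-- The path `π` starts at control state `q` (vacuously true for the empty path). -/
def startsAt {n : ℕ} (π : List (Transition n)) (q : Fin n) : Prop :=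
  ∀ t ∈ π.head?, t.1 = q

/-- The control state after the first `i` transitions of `π`, for a path
starting at control state `q`. -/
def stateAt {n : ℕ} (π : List (Transition n)) (q : Fin n) (i : ℕ) : Fin n :=
  (((π.take i).getLast?).map (fun t => t.2.2)).getD q

/-- The final control state of a path `π` starting at control state `q`. -/
def endState {n : ℕ} (π : List (Transition n)) (q : Fin n) : Fin n := stateAt π q π.length

/-- The counter values after the first `i` transitions of `π`, starting from
counter values `u`. -/
def vecAt {n : ℕ} (π : List (Transition n)) (u : Vec2) (i : ℕ) : Vec2 :=
  u + effect (π.take i)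

/-- The path `π` is enabled in the configuration `(q, u)`: it starts at `q`
and all intermediate counter values are nonnegative. -/
def Enabled {n : ℕ} (π : List (Transition n)) (q : Fin n) (u : Vec2) : Prop :=
  startsAt π q ∧ ∀ i ≤ π.length, 0 ≤ vecAt π u i

/-- For `j ∈ {1,2}`, the path `π` is `{j}`-enabled in the configuration `(q, u)`:
it starts at `q` and the `j`-th coordinate of all intermediate counter values is
nonnegative. -/
def JEnabled {n : ℕ} (π : List (Transition n)) (q : Fin n) (u : Vec2) (j : Fin 2) : Prop :=
  startsAt π q ∧ ∀ i ≤ π.length, 0 ≤ proj j (vecAt π u i)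

/-- A run of `V`: a path of `V` enabled in the configuration `(q, u)`.
Its source is `(q, u)`, its target is `(endState π q, vecAt π u π.length)`,
and its configurations are `(stateAt π q i, vecAt π u i)` for `i ≤ π.length`. -/
def IsRun {n : ℕ} (V : VASS n) (π : List (Transition n)) (q : Fin n) (u : Vec2) : Prop :=
  IsPath V π ∧ Enabled π q u

/-- A (0,0)-run of `V`: a run whose source and target counter values are `(0,0)`. -/
def IsZeroRun {n : ℕ} (V : VASS n) (π : List (Transition n)) (q : Fin n) : Prop :=
  IsRun V π q 0 ∧ effect π = 0

/-- A cycle of `V`: a nonempty path of `V` whose starting and ending control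
states coincide. -/
def IsCycle {n : ℕ} (V : VASS n) (γ : List (Transition n)) : Prop :=
  IsPath V γ ∧ γ ≠ [] ∧ γ.head?.map (fun t => t.1) = γ.getLast?.map (fun t => t.2.2)

/-- Reachability in the directed graph of `V`: there is a path of `V`
from `p` to `q` (possibly empty). -/
def Reach {n : ℕ} (V : VASS n) (p q : Fin n) : Prop :=
  ∃ π : List (Transition n), IsPath V π ∧ startsAt π p ∧ endState π p = q

/-- `S` is a strongly connected component of the directed graph of `V`:
it is nonempty, all its states are mutually reachable, and it is maximal
with this property. -/
def IsSCC {n : ℕ} (V : VASS n) (S : Set (Fin n)) : Prop :=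
  S.Nonempty ∧ (∀ p ∈ S, ∀ q ∈ S, Reach V p q) ∧
  (∀ p ∈ S, ∀ q : Fin n, Reach V p q → Reach V q p → q ∈ S)

/-- All control states occurring in the sequence of transitions `γ` belong to `S`. -/
def WithinS {n : ℕ} (S : Set (Fin n)) (γ : List (Transition n)) : Prop :=
  ∀ t ∈ γ, t.1 ∈ S ∧ t.2.2 ∈ S
/-!
Let `E` be the set of effects of the cycles within `S` of length at most `n`. It is finite.

If every semi-positive `u` has a positive scalar product with some element of `E`, then either `E`
contains a positive vector, or, taking `e ∈ E` of largest slope in the fourth quadrant, some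
`f ∈ E` in the second quadrant lies strictly above the line spanned by `e`. In the latter case
`(f.2 - f.1) • e + (e.1 - e.2) • f = det (e, f) • (1, 1)` is positive. Repeating the two underlying
cycles often enough outweighs the effect of the paths that connect them to a given state.

Otherwise some semi-positive `u` has a nonpositive scalar product with the effect of every short
cycle. Every cycle is assembled by successive insertions of short cycles, so the same holds for all
cycles, and their effects lie in the half-plane `{x | 0 ≤ -u ⬝ x}`.
-/

/-! ### Walks in labelled directed graphs -/

section Walks

variable {Q A : Type*} {T : Set (Q × A × Q)} {p q r : Q} {π ρ : List (Q × A × Q)}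

/-- `IsWalk T p π q`: the list `π` of labelled edges of `T` forms a walk from `p` to `q`. Unlike
`IsPath`, it records both endpoints, which also makes sense of an empty walk at a given vertex. -/
def IsWalk (T : Set (Q × A × Q)) : Q → List (Q × A × Q) → Q → Prop
  | p, [], q => p = q
  | p, t :: π, q => t ∈ T ∧ t.1 = p ∧ IsWalk T t.2.2 π q

theorem isWalk_append_iff : IsWalk T p (π ++ ρ) q ↔ ∃ r, IsWalk T p π r ∧ IsWalk T r ρ q := by
  induction π generalizing p with
  | nil => simp [IsWalk]
  | cons t π ih => simp only [List.cons_append, IsWalk, ih, exists_and_left, and_assoc]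

theorem isWalk_sep_iff {P : Q × A × Q → Prop} :
    IsWalk {t ∈ T | P t} p π q ↔ IsWalk T p π q ∧ ∀ t ∈ π, P t := by
  induction π generalizing p with
  | nil => simp [IsWalk]
  | cons t π ih =>
    simp only [IsWalk, ih, Set.mem_ofPred_eq, List.forall_mem_cons]
    tauto

namespace IsWalk

theorem append (hπ : IsWalk T p π q) (hρ : IsWalk T q ρ r) : IsWalk T p (π ++ ρ) r :=
  isWalk_append_iff.2 ⟨q, hπ, hρ⟩

theorem target_unique (hq : IsWalk T p π q) (hr : IsWalk T p π r) : q = r := by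
  induction π generalizing p with
  | nil => exact hq.symm.trans hr
  | cons t π ih => exact ih hq.2.2 hr.2.2

theorem of_append_left (h : IsWalk T p (π ++ ρ) q) (hπ : IsWalk T p π r) : IsWalk T r ρ q := by
  obtain ⟨s, hπs, hρ⟩ := isWalk_append_iff.1 h
  rwa [hπ.target_unique hπs]

theorem flatten_replicate (h : IsWalk T p π p) (k : ℕ) :
    IsWalk T p (List.replicate k π).flatten p := by
  induction k with
  | zero => rfl
  | succ k ih =>
    rw [List.replicate_succ, List.flatten_cons]
    exact h.append ih

theorem mem_of_mem (h : IsWalk T p π q) : ∀ t ∈ π, t ∈ T := by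
  induction π generalizing p with
  | nil => simp
  | cons t π ih => exact List.forall_mem_cons.2 ⟨h.1, ih h.2.2⟩

theorem exists_mem_source_eq (h : IsWalk T p π q) (hπ : π ≠ []) : ∃ t ∈ π, t.1 = p := by
  cases π with
  | nil => exact absurd rfl hπ
  | cons t π => exact ⟨t, List.mem_cons_self, h.2.1⟩

variable [Fintype Q]

theorem exists_cycle_factor (h : IsWalk T p π q) (hπ : Fintype.card Q ≤ π.length) :
    ∃ r a b c, π = a ++ b ++ c ∧ b ≠ [] ∧ b.length ≤ Fintype.card Q ∧
      IsWalk T p a r ∧ IsWalk T r b r ∧ IsWalk T r c q := by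
  have split_at (i : ℕ) : ∃ s, IsWalk T p (π.take i) s ∧ IsWalk T s (π.drop i) q :=
    isWalk_append_iff.1 (by rwa [List.take_append_drop])
  choose state prefix_walk suffix_walk using split_at
  obtain ⟨i, j, hij, hj, hstate⟩ :
      ∃ i j, i < j ∧ j ≤ Fintype.card Q ∧ state i = state j := by
    by_contra! hne
    have hinj : Function.Injective fun i : Fin (Fintype.card Q + 1) => state i :=
      Function.Injective.of_lt_imp_ne fun i j hij => hne i j hij (Nat.le_of_lt_succ j.2)
    simpa using Fintype.card_le_of_injective _ hinj
  have htake : π.take j = π.take i ++ (π.take j).drop i := by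
    conv_lhs => rw [← List.take_append_drop i (π.take j), List.take_take, min_eq_left hij.le]
  have hlen : ((π.take j).drop i).length = j - i := by
    rw [List.length_drop, List.length_take, min_eq_left (hj.trans hπ)]
  refine ⟨state i, π.take i, (π.take j).drop i, π.drop j, ?_, ?_, ?_, prefix_walk i, ?_, ?_⟩
  · rw [← htake, List.take_append_drop]
  · exact List.ne_nil_of_length_pos (by omega)
  · omega
  · have hj_walk := prefix_walk j
    rw [htake, ← hstate] at hj_walk
    exact hj_walk.of_append_left (prefix_walk i)
  · exact hstate ▸ suffix_walk j

theorem cycle_insertion_induction {motive : List (Q × A × Q) → Prop} (h : IsWalk T p π q)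
    (short : ∀ π, IsWalk T p π q → π.length < Fintype.card Q → motive π)
    (insert : ∀ r a b c, IsWalk T r b r → b ≠ [] → b.length ≤ Fintype.card Q →
      motive (a ++ c) → motive (a ++ b ++ c)) :
    motive π := by
  induction hk : π.length using Nat.strong_induction_on generalizing π with
  | _ k ih =>
    rcases lt_or_ge π.length (Fintype.card Q) with hπ | hπ
    · exact short π h hπ
    · obtain ⟨r, a, b, c, rfl, hb, hb_len, ha_walk, hb_walk, hc_walk⟩ := h.exists_cycle_factor hπ
      have hlt : (a ++ c).length < k := by
        have := List.length_pos_iff.2 hb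
        simp only [List.length_append] at hk ⊢
        omega
      exact insert r a b c hb_walk hb hb_len (ih _ hlt (ha_walk.append hc_walk) rfl)

theorem exists_length_lt_card (h : IsWalk T p π q) :
    ∃ ρ, IsWalk T p ρ q ∧ ρ.length < Fintype.card Q :=
  h.cycle_insertion_induction (motive := fun _ => ∃ ρ, IsWalk T p ρ q ∧ ρ.length < Fintype.card Q)
    (fun ρ hρ hlen => ⟨ρ, hρ, hlen⟩) (fun _ _ _ _ _ _ _ ih => ih)

theorem sum_map_nonpos_of_short {G : Type*} [AddCommMonoid G] [Preorder G] [AddLeftMono G]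
    {f : Q × A × Q → G}
    (hf : ∀ r γ, IsWalk T r γ r → γ ≠ [] → γ.length ≤ Fintype.card Q → (γ.map f).sum ≤ 0)
    (h : IsWalk T p π p) : (π.map f).sum ≤ 0 := by
  refine h.cycle_insertion_induction (motive := fun π => (π.map f).sum ≤ 0)
    (fun γ hγ hlen => ?_) (fun r a b c hb hb_ne hb_len ih => ?_)
  · rcases eq_or_ne γ [] with rfl | hne
    · simp
    · exact hf p γ hγ hne hlen.le
  · have hsum : ((a ++ b ++ c).map f).sum = ((a ++ c).map f).sum + (b.map f).sum := by
      simp only [List.map_append, List.sum_append]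
      abel
    rw [hsum]
    exact add_nonpos ih (hf r b hb hb_ne hb_len)

end IsWalk

end Walks

/-! ### Integer vectors in the plane -/

section Plane

variable {u v : Vec2} {k : ℕ}

theorem vnorm_le_iff : vnorm v ≤ k ↔ |v.1| ≤ k ∧ |v.2| ≤ k := by
  rw [vnorm, max_le_iff, Int.abs_eq_natAbs, Int.abs_eq_natAbs, Nat.cast_le, Nat.cast_le]

theorem vnorm_add_le (u v : Vec2) : vnorm (u + v) ≤ vnorm u + vnorm v :=
  max_le ((Int.natAbs_add_le _ _).trans (add_le_add (le_max_left _ _) (le_max_left _ _)))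
    ((Int.natAbs_add_le _ _).trans (add_le_add (le_max_right _ _) (le_max_right _ _)))

theorem finite_setOf_vnorm_le (k : ℕ) : {v | vnorm v ≤ k}.Finite := by
  refine (Set.finite_Icc ((-k, -k) : Vec2) (k, k)).subset fun v hv => ?_
  obtain ⟨h₁, h₂⟩ := vnorm_le_iff.1 hv
  exact ⟨⟨(abs_le.1 h₁).1, (abs_le.1 h₂).1⟩, ⟨(abs_le.1 h₁).2, (abs_le.1 h₂).2⟩⟩

theorem pos_smul_add (hv : Pos v) (hu : vnorm u ≤ k) : Pos ((k + 1) • v + u) := by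
  obtain ⟨hu₁, hu₂⟩ := vnorm_le_iff.1 hu
  have coord_pos {x y : ℤ} (hx : 0 < x) (hy : |y| ≤ k) : 0 < (k + 1) • x + y := by
    have hle : (k + 1 : ℤ) ≤ (k + 1) * x := le_mul_of_one_le_right (by positivity) hx
    rw [nsmul_eq_mul]
    push_cast
    linarith [(abs_le.1 hy).1]
  exact ⟨coord_pos hv.1 hu₁, coord_pos hv.2 hu₂⟩

/-- The scalar product with `u`, bundled as an additive map so that it commutes with sums of
effects. -/
def dot (u : Vec2) : Vec2 →+ ℤ :=
  (AddMonoidHom.mulLeft u.1).coprod (AddMonoidHom.mulLeft u.2)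

theorem dot_apply (u v : Vec2) : dot u v = u.1 * v.1 + u.2 * v.2 := rfl

theorem cast_dot (u v : Vec2) :
    ((dot u v : ℤ) : ℚ) = (toQ u).1 * (toQ v).1 + (toQ u).2 * (toQ v).2 := by
  simp [dot_apply, toQ]

theorem SemiPos.toQ_ne_zero (hu : SemiPos u) : toQ u ≠ 0 := by
  intro h
  simp only [toQ, Prod.mk_eq_zero, Int.cast_eq_zero] at h
  have := hu.2.2
  omega

theorem SemiPos.dot_toQ_pos (hu : SemiPos u) {x : ℚ × ℚ} (hx₁ : 0 < x.1) (hx₂ : 0 < x.2) :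
    0 < (toQ u).1 * x.1 + (toQ u).2 * x.2 := by
  have h₁ : 0 ≤ (toQ u).1 := Int.cast_nonneg hu.1
  have h₂ : 0 ≤ (toQ u).2 := Int.cast_nonneg hu.2.1
  rcases hu.2.2 with h | h
  · exact add_pos_of_pos_of_nonneg (mul_pos (Int.cast_pos.2 h) hx₁) (mul_nonneg h₂ hx₂.le)
  · exact add_pos_of_nonneg_of_pos (mul_nonneg h₁ hx₁.le) (mul_pos (Int.cast_pos.2 h) hx₂)

/-- `E` meets the open half-plane `{v | 0 < u ⬝ v}` for every semi-positive `u`. Since the closed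
half-planes without positive vectors are the sets `{v | u ⬝ v ≤ 0}` with `u` semi-positive, this
says that `E` is contained in none of them. -/
def MeetsPositiveHalfPlanes (E : Set Vec2) : Prop :=
  ∀ u, SemiPos u → ∃ e ∈ E, 0 < dot u e

theorem smul_add_smul_eq_det (e f : Vec2) :
    (f.2 - f.1) • e + (e.1 - e.2) • f =
      (e.1 * f.2 - e.2 * f.1, e.1 * f.2 - e.2 * f.1) := by
  ext <;> simp only [Prod.fst_add, Prod.snd_add, Prod.smul_fst, Prod.smul_snd, smul_eq_mul] <;>
    ring

namespace MeetsPositiveHalfPlanes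

variable {E : Set Vec2}

theorem exists_det_pos (hE : MeetsPositiveHalfPlanes E) (hfin : E.Finite)
    (hpos : ∀ e ∈ E, ¬Pos e) :
    ∃ e ∈ E, ∃ f ∈ E, (0 < e.1 ∧ e.2 ≤ 0) ∧ (f.1 ≤ 0 ∧ 0 < f.2) ∧
      0 < e.1 * f.2 - e.2 * f.1 := by
  obtain ⟨e₀, he₀, he₀_pos⟩ := hE (1, 0) (by simp [SemiPos])
  obtain ⟨e, ⟨he, he₁⟩, slope_max⟩ := Set.exists_max_image {e ∈ E | 0 < e.1}
    (fun e => (e.2 : ℚ) / e.1) (hfin.subset (Set.sep_subset _ _))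
    ⟨e₀, he₀, by simpa [dot_apply] using he₀_pos⟩
  have he₂ : e.2 ≤ 0 := not_lt.1 fun he₂ => hpos e he ⟨he₁, he₂⟩
  obtain ⟨f, hf, hdet⟩ := hE (-e.2, e.1) ⟨neg_nonneg.2 he₂, he₁.le, .inr he₁⟩
  rw [dot_apply] at hdet
  have hf₁ : f.1 ≤ 0 := by
    by_contra! hf₁
    have hslope := slope_max f ⟨hf, hf₁⟩
    rw [div_le_div_iff₀ (by exact_mod_cast hf₁) (by exact_mod_cast he₁)] at hslope
    have : f.2 * e.1 ≤ e.2 * f.1 := by exact_mod_cast hslope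
    linarith
  have hf₂ : 0 < f.2 := by
    have : 0 ≤ e.2 * f.1 := mul_nonneg_of_nonpos_of_nonpos he₂ hf₁
    exact pos_of_mul_pos_right (by linarith : 0 < e.1 * f.2) he₁.le
  exact ⟨e, he, f, hf, ⟨he₁, he₂⟩, ⟨hf₁, hf₂⟩, by linarith⟩

theorem exists_pos_combination (hE : MeetsPositiveHalfPlanes E) {N : ℕ}
    (hN : ∀ e ∈ E, vnorm e ≤ N) :
    ∃ e ∈ E, ∃ f ∈ E, ∃ α β : ℕ, α ≤ 2 * N ∧ β ≤ 2 * N ∧ Pos (α • e + β • f) := by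
  by_cases hpos : ∃ e ∈ E, Pos e
  · obtain ⟨e, he, he_pos⟩ := hpos
    have hN_pos : (0 : ℤ) < N :=
      (abs_pos.2 he_pos.1.ne').trans_le (vnorm_le_iff.1 (hN e he)).1
    exact ⟨e, he, e, he, 1, 0, by omega, by omega, by simpa using he_pos⟩
  · push Not at hpos
    obtain ⟨e, he, f, hf, ⟨he₁, he₂⟩, ⟨hf₁, hf₂⟩, hdet⟩ :=
      hE.exists_det_pos ((finite_setOf_vnorm_le N).subset hN) hpos
    have he_norm := vnorm_le_iff.1 (hN e he)
    have hf_norm := vnorm_le_iff.1 (hN f hf)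
    rw [abs_le, abs_le] at he_norm hf_norm
    refine ⟨e, he, f, hf, (f.2 - f.1).toNat, (e.1 - e.2).toNat, by omega, by omega, ?_⟩
    rw [← natCast_zsmul, ← natCast_zsmul, Int.toNat_of_nonneg (by omega),
      Int.toNat_of_nonneg (by omega), smul_add_smul_eq_det]
    exact ⟨hdet, hdet⟩

end MeetsPositiveHalfPlanes

end Plane

/-! ### Cycles and strongly connected components -/

section VASS

variable {n : ℕ} {V : VASS n} {S : Set (Fin n)} {p q r : Fin n} {π γ : List (Transition n)}

theorem effect_append (π ρ : List (Transition n)) : effect (π ++ ρ) = effect π + effect ρ := by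
  simp [effect]

theorem effect_flatten_replicate (k : ℕ) (π : List (Transition n)) :
    effect (List.replicate k π).flatten = k • effect π := by
  simp [effect, List.map_flatten, List.sum_flatten]

theorem map_effect {G : Type*} [AddCommMonoid G] (L : Vec2 →+ G) (π : List (Transition n)) :
    L (effect π) = (π.map fun t => L t.2.1).sum := by
  rw [effect, map_list_sum, List.map_map, Function.comp_def]

theorem vnorm_effect_le (hπ : ∀ t ∈ π, t ∈ V) : vnorm (effect π) ≤ π.length * vassNorm V := by
  induction π with
  | nil => simp [effect, vnorm]
  | cons t π ih =>
    rw [List.forall_mem_cons] at hπ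
    have ht : vnorm t.2.1 ≤ vassNorm V := Finset.le_sup (f := fun t => vnorm t.2.1) hπ.1
    calc vnorm (effect (t :: π)) = vnorm (t.2.1 + effect π) := by simp [effect]
      _ ≤ vnorm t.2.1 + vnorm (effect π) := vnorm_add_le _ _
      _ ≤ vassNorm V + π.length * vassNorm V := add_le_add ht (ih hπ.2)
      _ = (t :: π).length * vassNorm V := by rw [List.length_cons]; ring

theorem isPath_cons_iff {t : Transition n} :
    IsPath V (t :: π) ↔ t ∈ V ∧ startsAt π t.2.2 ∧ IsPath V π := by
  have isPath_iff (ρ : List (Transition n)) :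
      IsPath V ρ ↔ (∀ t ∈ ρ, t ∈ V) ∧ ρ.IsChain fun s t => s.2.2 = t.1 := Iff.rfl
  simp only [isPath_iff, startsAt, List.forall_mem_cons, List.isChain_cons, eq_comm (a := t.2.2)]
  tauto

theorem startsAt_cons_iff {t : Transition n} : startsAt (t :: π) p ↔ t.1 = p := by
  simp [startsAt]

theorem endState_cons (t : Transition n) (π : List (Transition n)) (p : Fin n) :
    endState (t :: π) p = endState π t.2.2 := by
  simp only [endState, stateAt, List.take_length, List.getLast?_cons]
  cases π.getLast? <;> rfl

theorem isWalk_iff_isPath :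
    IsWalk (V : Set (Transition n)) p π q ↔ IsPath V π ∧ startsAt π p ∧ endState π p = q := by
  induction π generalizing p with
  | nil =>
    have isPath_nil : IsPath V [] := ⟨by simp, List.isChain_nil⟩
    simp [IsWalk, isPath_nil, startsAt, endState, stateAt]
  | cons t π ih =>
    rw [IsWalk, ih, endState_cons, isPath_cons_iff, startsAt_cons_iff, Finset.mem_coe]
    tauto

theorem reach_iff_exists_isWalk : Reach V p q ↔ ∃ π, IsWalk (V : Set (Transition n)) p π q := by
  simp only [Reach, isWalk_iff_isPath]

theorem Reach.trans (hpq : Reach V p q) (hqr : Reach V q r) : Reach V p r := by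
  rw [reach_iff_exists_isWalk] at *
  obtain ⟨π, hπ⟩ := hpq
  obtain ⟨ρ, hρ⟩ := hqr
  exact ⟨π ++ ρ, hπ.append hρ⟩

theorem isCycle_iff_exists_isWalk :
    IsCycle V γ ↔ γ ≠ [] ∧ ∃ p, IsWalk (V : Set (Transition n)) p γ p := by
  cases γ with
  | nil => simp [IsCycle]
  | cons t γ =>
    simp only [isWalk_iff_isPath, IsCycle, startsAt, endState, stateAt, List.take_length,
      List.getLast?_cons, List.head?_cons, Option.map_some, Option.getD_some, Option.some.injEq,
      Option.mem_def, forall_eq', ne_eq, reduceCtorEq, not_false_eq_true, true_and]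
    exact ⟨fun ⟨hγ, hclosed⟩ => ⟨t.1, hγ, rfl, hclosed.symm⟩,
      fun ⟨p, hγ, hsource, htarget⟩ => ⟨hγ, hsource.trans htarget.symm⟩⟩

/-- The transitions of `V` with both control states in `S`. -/
def transitionsWithin (V : VASS n) (S : Set (Fin n)) : Set (Transition n) :=
  {t ∈ (V : Set (Transition n)) | t.1 ∈ S ∧ t.2.2 ∈ S}

theorem isWalk_transitionsWithin_iff :
    IsWalk (transitionsWithin V S) p π q ↔ IsWalk (V : Set (Transition n)) p π q ∧ WithinS S π :=
  isWalk_sep_iff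

theorem isCycle_and_withinS_iff :
    IsCycle V γ ∧ WithinS S γ ↔ γ ≠ [] ∧ ∃ p, IsWalk (transitionsWithin V S) p γ p := by
  simp only [isCycle_iff_exists_isWalk, isWalk_transitionsWithin_iff, exists_and_right, and_assoc]

theorem IsWalk.source_mem (h : IsWalk (transitionsWithin V S) p π q) (hπ : π ≠ []) : p ∈ S := by
  obtain ⟨t, ht, rfl⟩ := h.exists_mem_source_eq hπ
  exact (h.mem_of_mem t ht).2.1

theorem IsWalk.vnorm_effect_le_of_length_le (h : IsWalk (transitionsWithin V S) p π q) {k : ℕ}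
    (hπ : π.length ≤ k) : vnorm (effect π) ≤ k * vassNorm V :=
  (vnorm_effect_le fun t ht => (h.mem_of_mem t ht).1).trans (Nat.mul_le_mul_right _ hπ)

/-- The effects of the cycles within `S` that have at most as many transitions as there are
control states. -/
def shortCycleEffects (V : VASS n) (S : Set (Fin n)) : Set Vec2 :=
  {v | ∃ γ, (IsCycle V γ ∧ WithinS S γ) ∧ γ.length ≤ n ∧ effect γ = v}

theorem mem_shortCycleEffects_iff {v : Vec2} : v ∈ shortCycleEffects V S ↔
    ∃ r ∈ S, ∃ γ, IsWalk (transitionsWithin V S) r γ r ∧ γ ≠ [] ∧ γ.length ≤ n ∧ effect γ = v := by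
  simp only [shortCycleEffects, isCycle_and_withinS_iff, Set.mem_ofPred_eq]
  constructor
  · rintro ⟨γ, ⟨hne, r, hγ⟩, hlen, rfl⟩
    exact ⟨r, hγ.source_mem hne, γ, hγ, hne, hlen, rfl⟩
  · rintro ⟨r, -, γ, hγ, hne, hlen, rfl⟩
    exact ⟨γ, ⟨hne, r, hγ⟩, hlen, rfl⟩

theorem vnorm_le_of_mem_shortCycleEffects {v : Vec2} (hv : v ∈ shortCycleEffects V S) :
    vnorm v ≤ n * vassNorm V := by
  obtain ⟨r, -, γ, hγ, -, hlen, rfl⟩ := mem_shortCycleEffects_iff.1 hv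
  exact hγ.vnorm_effect_le_of_length_le hlen

theorem map_effect_nonpos_of_shortCycleEffects {G : Type*} [AddCommMonoid G] [Preorder G]
    [AddLeftMono G] {L : Vec2 →+ G} (hL : ∀ v ∈ shortCycleEffects V S, L v ≤ 0)
    (hγ : IsCycle V γ) (hγS : WithinS S γ) : L (effect γ) ≤ 0 := by
  obtain ⟨-, p, hwalk⟩ := isCycle_and_withinS_iff.1 ⟨hγ, hγS⟩
  rw [map_effect]
  refine hwalk.sum_map_nonpos_of_short fun r δ hδ hne hlen => ?_
  rw [Fintype.card_fin] at hlen
  rw [← map_effect]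
  exact hL _ (mem_shortCycleEffects_iff.2 ⟨r, hδ.source_mem hne, δ, hδ, hne, hlen, rfl⟩)

namespace IsSCC

theorem isWalk_within (hS : IsSCC V S) (hp : p ∈ S) (hq : q ∈ S)
    (h : IsWalk (V : Set (Transition n)) p π q) : IsWalk (transitionsWithin V S) p π q := by
  induction π generalizing p with
  | nil => exact h
  | cons t π ih =>
    obtain ⟨htV, rfl, hπ⟩ := h
    have reach_target : Reach V t.1 t.2.2 := reach_iff_exists_isWalk.2 ⟨[t], htV, rfl, rfl⟩
    have reach_source : Reach V t.2.2 t.1 :=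
      (reach_iff_exists_isWalk.2 ⟨π, hπ⟩).trans (hS.2.1 q hq t.1 hp)
    have ht : t.2.2 ∈ S := hS.2.2 t.1 hp t.2.2 reach_target reach_source
    exact ⟨⟨htV, hp, ht⟩, rfl, ih ht hπ⟩

theorem exists_short_isWalk (hS : IsSCC V S) (hp : p ∈ S) (hq : q ∈ S) :
    ∃ π, IsWalk (transitionsWithin V S) p π q ∧ π.length ≤ n := by
  obtain ⟨π, hπ⟩ := reach_iff_exists_isWalk.1 (hS.2.1 p hp q hq)
  obtain ⟨ρ, hρ, hlen⟩ := (hS.isWalk_within hp hq hπ).exists_length_lt_card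
  exact ⟨ρ, hρ, by simpa using hlen.le⟩

theorem exists_isWalk_repeating (hS : IsSCC V S) (hp : p ∈ S) (hr : r ∈ S)
    (hγ : IsWalk (transitionsWithin V S) r γ r) (k : ℕ) :
    ∃ η u, IsWalk (transitionsWithin V S) p η p ∧ effect η = k • effect γ + u ∧
      vnorm u ≤ 2 * (n * vassNorm V) ∧ η.length ≤ 2 * n + k * γ.length := by
  obtain ⟨π, hπ, hπ_len⟩ := hS.exists_short_isWalk hp hr
  obtain ⟨ρ, hρ, hρ_len⟩ := hS.exists_short_isWalk hr hp
  refine ⟨π ++ (List.replicate k γ).flatten ++ ρ, effect π + effect ρ,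
    (hπ.append (hγ.flatten_replicate k)).append hρ, ?_, ?_, ?_⟩
  · rw [effect_append, effect_append, effect_flatten_replicate]
    abel
  · calc vnorm (effect π + effect ρ) ≤ vnorm (effect π) + vnorm (effect ρ) := vnorm_add_le _ _
      _ ≤ n * vassNorm V + n * vassNorm V :=
        add_le_add (hπ.vnorm_effect_le_of_length_le hπ_len)
          (hρ.vnorm_effect_le_of_length_le hρ_len)
      _ = 2 * (n * vassNorm V) := (two_mul _).symm
  · simp only [List.length_append, List.length_flatten, List.map_replicate, List.sum_replicate,
      smul_eq_mul]
    omega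

theorem exists_pos_isWalk (hS : IsSCC V S)
    (hE : MeetsPositiveHalfPlanes (shortCycleEffects V S)) (hp : p ∈ S) :
    ∃ η, IsWalk (transitionsWithin V S) p η p ∧ Pos (effect η) ∧
      η.length ≤ 4 * (n * vassNorm V) + 4 * (n * vassNorm V) ^ 2 * (4 * (n * vassNorm V) + 1) := by
  obtain ⟨N, hN⟩ : ∃ N, N = n * vassNorm V := ⟨_, rfl⟩
  rw [← hN]
  obtain ⟨e, he, f, hf, α, β, hα, hβ, hpos⟩ := hE.exists_pos_combination (N := N) fun e he =>
    hN ▸ vnorm_le_of_mem_shortCycleEffects he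
  obtain ⟨r, hr, γ, hγ, -, hγ_len, rfl⟩ := mem_shortCycleEffects_iff.1 he
  obtain ⟨s, hs, δ, hδ, -, hδ_len, rfl⟩ := mem_shortCycleEffects_iff.1 hf
  have hn : n ≤ N := by
    rw [hN]
    refine Nat.le_mul_of_pos_right n (Nat.pos_of_ne_zero fun hM => ?_)
    have hα₀ : α = 0 := by simpa [hN, hM] using hα
    have hβ₀ : β = 0 := by simpa [hN, hM] using hβ
    simp [hα₀, hβ₀, Pos] at hpos
  obtain ⟨η₁, u₁, hη₁, heff₁, hu₁, hlen₁⟩ :=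
    hS.exists_isWalk_repeating hp hr hγ ((4 * N + 1) * α)
  obtain ⟨η₂, u₂, hη₂, heff₂, hu₂, hlen₂⟩ :=
    hS.exists_isWalk_repeating hp hs hδ ((4 * N + 1) * β)
  refine ⟨η₁ ++ η₂, hη₁.append hη₂, ?_, ?_⟩
  · have hu : vnorm (u₁ + u₂) ≤ 4 * N := (vnorm_add_le u₁ u₂).trans (by omega)
    have heff : effect (η₁ ++ η₂) =
        (4 * N + 1) • (α • effect γ + β • effect δ) + (u₁ + u₂) := by
      rw [effect_append, heff₁, heff₂, smul_add, mul_smul, mul_smul]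
      abel
    exact heff ▸ pos_smul_add hpos hu
  · calc (η₁ ++ η₂).length
        ≤ (2 * n + (4 * N + 1) * α * γ.length) + (2 * n + (4 * N + 1) * β * δ.length) :=
          List.length_append.trans_le (add_le_add hlen₁ hlen₂)
      _ ≤ (2 * N + (4 * N + 1) * (2 * N) * N) + (2 * N + (4 * N + 1) * (2 * N) * N) := by
          gcongr <;> omega
      _ = 4 * N + 4 * N ^ 2 * (4 * N + 1) := by ring

theorem exists_pos_cycle (hS : IsSCC V S)
    (hE : MeetsPositiveHalfPlanes (shortCycleEffects V S)) (hp : p ∈ S) :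
    ∃ γ, IsCycle V γ ∧ WithinS S γ ∧ (∃ t ∈ γ, t.1 = p) ∧ Pos (effect γ) ∧
      γ.length ≤ 4 * (n * vassNorm V) + 4 * (n * vassNorm V) ^ 2 * (4 * (n * vassNorm V) + 1) := by
  obtain ⟨γ, hγ, hpos, hlen⟩ := hS.exists_pos_isWalk hE hp
  have hne : γ ≠ [] := by
    rintro rfl
    exact absurd hpos.1 (lt_irrefl _)
  obtain ⟨hcycle, hwithin⟩ := isCycle_and_withinS_iff.2 ⟨hne, p, hγ⟩
  exact ⟨γ, hcycle, hwithin, hγ.exists_mem_source_eq hne, hpos, hlen⟩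

end IsSCC

end VASS

/-- SCC dichotomy.  There is a polynomial `q` with natural
coefficients such that every SCC `S` of a 2-VASS `V` (with `n` states and norm
`M`) satisfies: (a) every state of `S` lies on a cycle within `S` with positive
effect and length at most `q(nM)`; or (b) there is a closed half-plane
containing no positive vector that contains the effects of all cycles
within `S`. -/
theorem scc_dichotomy :
    ∃ qp : Polynomial ℕ, ∀ (n : ℕ) (V : VASS n) (S : Set (Fin n)),
      IsSCC V S →
      (∀ p ∈ S, ∃ γ : List (Transition n),
          IsCycle V γ ∧ WithinS S γ ∧ (∃ t ∈ γ, t.1 = p) ∧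
          Pos (effect γ) ∧ γ.length ≤ qp.eval (n * vassNorm V)) ∨
      (∃ w : ℚ × ℚ, w ≠ 0 ∧
        (∀ x : ℚ × ℚ, 0 < x.1 → 0 < x.2 → ¬ (0 ≤ w.1 * x.1 + w.2 * x.2)) ∧
        (∀ γ : List (Transition n), IsCycle V γ → WithinS S γ →
          0 ≤ w.1 * ((effect γ).1 : ℚ) + w.2 * ((effect γ).2 : ℚ))) := by
  refine ⟨4 * Polynomial.X + 4 * Polynomial.X ^ 2 * (4 * Polynomial.X + 1), fun n V S hS => ?_⟩
  by_cases hE : MeetsPositiveHalfPlanes (shortCycleEffects V S)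
  · left
    intro p hp
    simpa using hS.exists_pos_cycle hE hp
  · right
    obtain ⟨u, hu, hle⟩ : ∃ u, SemiPos u ∧ ∀ v ∈ shortCycleEffects V S, dot u v ≤ 0 := by
      simpa [MeetsPositiveHalfPlanes] using hE
    refine ⟨-toQ u, neg_ne_zero.2 hu.toQ_ne_zero, fun x hx₁ hx₂ h => ?_, fun γ hγ hγS => ?_⟩
    · have hpos := hu.dot_toQ_pos hx₁ hx₂
      simp only [Prod.fst_neg, Prod.snd_neg] at h
      linarith
    · have hdot := Int.cast_nonpos (R := ℚ).2 (map_effect_nonpos_of_shortCycleEffects hle hγ hγS)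
      rw [cast_dot] at hdot
      change 0 ≤ -(toQ u).1 * (toQ (effect γ)).1 + -(toQ u).2 * (toQ (effect γ)).2
      linarith
end

section
/- Thin runs do not change belts far from the origin: let V be a 2-VASS with n control states and norm M, let A ∈ ℕ, let τ be an A-thin run of V, and set W = A + √2·M, B = 6·W·A² + 3·W, and S = [0,B] × [0,B]. Then for any two consecutive configurations (q,w) and (q',w') of τ (i.e., related by a single transition of τ) with w ∉ S and w' ∉ S, there exists a single A-belt containing both w and w'. -/
/-! ### Belts and thin runs -/

/-- Embedding of integer vectors into the Euclidean plane. -/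
noncomputable def toE (v : Vec2) : EuclideanSpace ℝ (Fin 2) :=
  (WithLp.equiv 2 (Fin 2 → ℝ)).symm ![(v.1 : ℝ), (v.2 : ℝ)]

/-- The half-line `ℝ≥0 · v` in the Euclidean plane induced by `v`. -/
noncomputable def rayE (v : Vec2) : Set (EuclideanSpace ℝ (Fin 2)) :=
  {x | ∃ a : ℝ, 0 ≤ a ∧ x = a • toE v}

/-- The Euclidean distance from the point `u` to the half-line induced by `v`. -/
noncomputable def distToRay (u v : Vec2) : ℝ := Metric.infDist (toE u) (rayE v)

/-- `u` belongs to the belt of direction `v` and width `W`: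
`u` is nonnegative and its Euclidean distance to the half-line `ℓ_v` is at most `W`. -/
def InBelt (u : Vec2) (v : Vec2) (W : ℝ) : Prop :=
  (0 : Vec2) ≤ u ∧ distToRay u v ≤ W

/-- A run (given by its path `π` and source counter values `u`) is `A`-thin if
each of its configurations lies in some `A`-belt, i.e. a belt whose direction
has norm at most `A` and whose width is at most `A`. -/
def IsThin {n : ℕ} (A : ℕ) (π : List (Transition n)) (u : Vec2) : Prop :=
  ∀ i ≤ π.length, ∃ v : Vec2, (0 : Vec2) ≤ v ∧ vnorm v ≤ A ∧
    ∃ W : ℝ, W ≤ (A : ℝ) ∧ InBelt (vecAt π u i) v W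

/-- The counter values `u` lie in the square `[0, B] × [0, B]` (viewed in ℝ). -/
def InSquare (B : ℝ) (u : Vec2) : Prop :=
  0 ≤ (u.1 : ℝ) ∧ (u.1 : ℝ) ≤ B ∧ 0 ≤ (u.2 : ℝ) ∧ (u.2 : ℝ) ≤ B

/-!
Let `w` and `w'` be consecutive, in `A`-belts of directions `v` and `v'`. A transition moves the
counters by at most `√2 M`, so both `w` and `w'` are within `W = A + √2 M` of both half-lines.
Suppose that the half-lines differ and neither is degenerate. As `v` and `v'` are nonnegative and
integral, `|det (v, v')| ≥ 1`. If a point is within `W` of both `a v` and `b v'`, then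
`|a| ≤ |a det (v, v')| = |det (a v - b v', v')| ≤ 2 W ‖v'‖`,
so the norm of the point is at most `(2 ‖v‖ ‖v'‖ + 1) W ≤ (4 A² + 1) W ≤ B`.
-/

section PlaneGeometry

variable {E : Type*} [NormedAddCommGroup E] [InnerProductSpace ℝ E]
  [Fact (Module.finrank ℝ E = 2)]

lemma norm_le_of_dist_smul_le (o : Orientation ℝ E (Fin 2)) {x v w : E} {a b D : ℝ}
    (hvw : o.areaForm v w ≠ 0) (hv : dist x (a • v) ≤ D) (hw : dist x (b • w) ≤ D) :
    ‖x‖ ≤ (2 * ‖v‖ * ‖w‖ / |o.areaForm v w| + 1) * D := by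
  have hab : ‖a • v - b • w‖ ≤ 2 * D := by
    rw [← dist_eq_norm, two_mul]
    exact (dist_triangle_left _ _ x).trans (add_le_add hv hw)
  have ha : |a| ≤ 2 * D * ‖w‖ / |o.areaForm v w| := by
    rw [le_div_iff₀ (abs_pos.mpr hvw)]
    calc |a| * |o.areaForm v w| = |o.areaForm (a • v - b • w) w| := by simp [abs_mul]
      _ ≤ ‖a • v - b • w‖ * ‖w‖ := o.abs_areaForm_le _ _
      _ ≤ 2 * D * ‖w‖ := by gcongr
  calc ‖x‖ ≤ ‖a • v‖ + ‖x - a • v‖ := norm_le_insert' _ _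
    _ ≤ |a| * ‖v‖ + D := by rw [norm_smul, Real.norm_eq_abs, ← dist_eq_norm]; gcongr
    _ ≤ 2 * D * ‖w‖ / |o.areaForm v w| * ‖v‖ + D := by gcongr
    _ = (2 * ‖v‖ * ‖w‖ / |o.areaForm v w| + 1) * D := by ring

end PlaneGeometry

section Embedding

open scoped EuclideanSpace RealInnerProductSpace

/-- The standard orientation of the Euclidean plane, for which the area form is the determinant. -/
noncomputable def planeOrientation : Orientation ℝ (EuclideanSpace ℝ (Fin 2)) (Fin 2) :=
  (EuclideanSpace.basisFun (Fin 2) ℝ).toBasis.orientation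

@[simp] lemma toE_apply_zero (v : Vec2) : toE v 0 = v.1 := rfl

@[simp] lemma toE_apply_one (v : Vec2) : toE v 1 = v.2 := rfl

lemma toE_add (v w : Vec2) : toE (v + w) = toE v + toE w := by
  ext i
  fin_cases i <;> simp

lemma cast_vnorm (v : Vec2) : (vnorm v : ℝ) = ‖v‖ := by
  simp [vnorm, Prod.norm_def, Int.norm_eq_abs, Nat.cast_natAbs]

lemma norm_toE_le (v : Vec2) : ‖toE v‖ ≤ √2 * vnorm v := by
  have h_fst : ‖toE v 0‖ ≤ vnorm v := cast_vnorm v ▸ norm_fst_le v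
  have h_snd : ‖toE v 1‖ ≤ vnorm v := cast_vnorm v ▸ norm_snd_le v
  calc ‖toE v‖ = √(‖toE v 0‖ ^ 2 + ‖toE v 1‖ ^ 2) := by
        rw [EuclideanSpace.norm_eq, Fin.sum_univ_two]
    _ ≤ √((vnorm v : ℝ) ^ 2 + (vnorm v : ℝ) ^ 2) := by gcongr
    _ = √2 * vnorm v := by
        rw [← two_mul, Real.sqrt_mul zero_le_two, Real.sqrt_sq (Nat.cast_nonneg _)]

lemma areaForm_toE (v w : Vec2) :
    planeOrientation.areaForm (toE v) (toE w) = (v.1 * w.2 - v.2 * w.1 : ℤ) := by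
  rw [planeOrientation, Orientation.areaForm_to_volumeForm,
    Orientation.volumeForm_robust _ (EuclideanSpace.basisFun (Fin 2) ℝ) rfl,
    Module.Basis.det_apply, Matrix.det_fin_two]
  simp [Module.Basis.toMatrix_apply, mul_comm]

lemma one_le_abs_areaForm_toE {v w : Vec2}
    (h : planeOrientation.areaForm (toE v) (toE w) ≠ 0) :
    1 ≤ |planeOrientation.areaForm (toE v) (toE w)| := by
  rw [areaForm_toE] at h ⊢
  exact_mod_cast Int.one_le_abs (Int.cast_ne_zero.mp h)

lemma inner_toE_nonneg {v w : Vec2} (hv : 0 ≤ v) (hw : 0 ≤ w) : 0 ≤ ⟪toE v, toE w⟫ := by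
  rw [PiLp.inner_apply, Fin.sum_univ_two]
  exact add_nonneg (mul_nonneg (Int.cast_nonneg hw.1) (Int.cast_nonneg hv.1))
    (mul_nonneg (Int.cast_nonneg hw.2) (Int.cast_nonneg hv.2))

lemma inSquare_of_norm_toE_le {u : Vec2} {B : ℝ} (hu : 0 ≤ u) (h : ‖toE u‖ ≤ B) :
    InSquare B u := by
  have h_le (i : Fin 2) : toE u i ≤ B :=
    (le_abs_self _).trans ((PiLp.norm_apply_le (toE u) i).trans h)
  exact ⟨Int.cast_nonneg hu.1, h_le 0, Int.cast_nonneg hu.2, h_le 1⟩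

lemma InSquare.mono {u : Vec2} {B B' : ℝ} (h : InSquare B u) (hB : B ≤ B') : InSquare B' u :=
  ⟨h.1, h.2.1.trans hB, h.2.2.1, h.2.2.2.trans hB⟩

end Embedding

section Rays

open scoped EuclideanSpace

lemma rayE_eq_image (v : Vec2) : rayE v = (fun a : ℝ ↦ a • toE v) '' Set.Ici 0 := by
  ext x
  simp [rayE, eq_comm]

lemma isClosed_rayE (v : Vec2) : IsClosed (rayE v) := by
  rw [rayE_eq_image]
  exact isClosedMap_smul_left (toE v) _ isClosed_Ici

lemma zero_mem_rayE (v : Vec2) : 0 ∈ rayE v := ⟨0, le_rfl, (zero_smul ℝ _).symm⟩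

lemma exists_dist_smul_toE_eq_distToRay (u v : Vec2) :
    ∃ a : ℝ, dist (toE u) (a • toE v) = distToRay u v := by
  obtain ⟨_, ⟨a, -, rfl⟩, h⟩ :=
    (isClosed_rayE v).exists_infDist_eq_dist ⟨0, zero_mem_rayE v⟩ (toE u)
  exact ⟨a, h.symm⟩

lemma distToRay_nonneg (u v : Vec2) : 0 ≤ distToRay u v := Metric.infDist_nonneg

lemma distToRay_le_add_dist (u u' v : Vec2) :
    distToRay u v ≤ distToRay u' v + dist (toE u) (toE u') :=
  Metric.infDist_le_infDist_add_dist

lemma rayE_eq_of_sameRay {v w : Vec2} (h : SameRay ℝ (toE v) (toE w)) (hv : toE v ≠ 0)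
    (hw : toE w ≠ 0) : rayE v = rayE w := by
  obtain ⟨r, hr, hrw⟩ := h.exists_pos_left hv hw
  ext x
  constructor
  · rintro ⟨a, ha, rfl⟩
    exact ⟨a / r, by positivity, by rw [← hrw, smul_smul, div_mul_cancel₀ a hr.ne']⟩
  · rintro ⟨a, ha, rfl⟩
    exact ⟨a * r, by positivity, by rw [← hrw, smul_smul]⟩

lemma areaForm_toE_ne_zero_of_rayE_ne {v w : Vec2} (hv : 0 ≤ v) (hw : 0 ≤ w) (hv0 : toE v ≠ 0)
    (hw0 : toE w ≠ 0) (hne : rayE v ≠ rayE w) :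
    planeOrientation.areaForm (toE v) (toE w) ≠ 0 := fun h ↦
  hne <| rayE_eq_of_sameRay
    ((planeOrientation.nonneg_inner_and_areaForm_eq_zero_iff_sameRay _ _).mp
      ⟨inner_toE_nonneg hv hw, h⟩) hv0 hw0

lemma distToRay_of_toE_eq_zero {v : Vec2} (h : toE v = 0) (u : Vec2) :
    distToRay u v = ‖toE u‖ := by
  obtain ⟨a, ha⟩ := exists_dist_smul_toE_eq_distToRay u v
  rw [← ha, h, smul_zero, dist_zero_right]

lemma norm_toE_le_of_rayE_ne {u v w : Vec2} {D : ℝ} (hv : 0 ≤ v) (hw : 0 ≤ w)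
    (hne : rayE v ≠ rayE w) (huv : distToRay u v ≤ D) (huw : distToRay u w ≤ D) :
    ‖toE u‖ ≤ (2 * ‖toE v‖ * ‖toE w‖ + 1) * D := by
  have hD : 0 ≤ D := (distToRay_nonneg u v).trans huv
  have hD_le : D ≤ (2 * ‖toE v‖ * ‖toE w‖ + 1) * D :=
    le_mul_of_one_le_left hD (le_add_of_nonneg_left (by positivity))
  by_cases hv0 : toE v = 0
  · exact (distToRay_of_toE_eq_zero hv0 u).ge.trans (huv.trans hD_le)
  by_cases hw0 : toE w = 0
  · exact (distToRay_of_toE_eq_zero hw0 u).ge.trans (huw.trans hD_le)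
  have hω : planeOrientation.areaForm (toE v) (toE w) ≠ 0 :=
    areaForm_toE_ne_zero_of_rayE_ne hv hw hv0 hw0 hne
  obtain ⟨a, ha⟩ := exists_dist_smul_toE_eq_distToRay u v
  obtain ⟨b, hb⟩ := exists_dist_smul_toE_eq_distToRay u w
  refine (norm_le_of_dist_smul_le planeOrientation hω (ha.trans_le huv) (hb.trans_le huw)).trans ?_
  gcongr
  exact div_le_self (by positivity) (one_le_abs_areaForm_toE hω)

lemma inSquare_of_rayE_ne {u v w : Vec2} {A : ℕ} {D : ℝ} (hu : 0 ≤ u) (hv : 0 ≤ v)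
    (hw : 0 ≤ w) (hvA : vnorm v ≤ A) (hwA : vnorm w ≤ A) (hne : rayE v ≠ rayE w)
    (huv : distToRay u v ≤ D) (huw : distToRay u w ≤ D) :
    InSquare ((4 * A ^ 2 + 1) * D) u := by
  have hD : 0 ≤ D := (distToRay_nonneg u v).trans huv
  have hv_norm : ‖toE v‖ ≤ √2 * A := (norm_toE_le v).trans (by gcongr)
  have hw_norm : ‖toE w‖ ≤ √2 * A := (norm_toE_le w).trans (by gcongr)
  apply inSquare_of_norm_toE_le hu
  calc ‖toE u‖ ≤ (2 * ‖toE v‖ * ‖toE w‖ + 1) * D := norm_toE_le_of_rayE_ne hv hw hne huv huw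
    _ ≤ (2 * (√2 * A) * (√2 * A) + 1) * D := by gcongr
    _ = (4 * A ^ 2 + 1) * D := by linear_combination 2 * A ^ 2 * D * Real.sq_sqrt zero_le_two

end Rays

section Runs

variable {n : ℕ} {V : VASS n} {π : List (Transition n)}

lemma vecAt_succ (u : Vec2) {i : ℕ} (hi : i < π.length) :
    vecAt π u (i + 1) = vecAt π u i + π[i].2.1 := by
  simp only [vecAt, effect, ← List.take_concat_get' π i hi, List.map_append, List.sum_append,
    List.map_singleton, List.sum_singleton, add_assoc]

lemma IsPath.dist_toE_vecAt_succ_le (hπ : IsPath V π) (u : Vec2) {i : ℕ} (hi : i < π.length) :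
    dist (toE (vecAt π u i)) (toE (vecAt π u (i + 1))) ≤ √2 * vassNorm V := by
  have h_effect : vnorm π[i].2.1 ≤ vassNorm V :=
    Finset.le_sup (f := fun t : Transition n ↦ vnorm t.2.1) (hπ.1 _ (List.getElem_mem hi))
  rw [vecAt_succ u hi, toE_add, dist_self_add_right]
  exact (norm_toE_le _).trans (by gcongr)

end Runs

theorem thin_run_belts_stable_general {n : ℕ} {V : VASS n} {π : List (Transition n)} {u : Vec2}
    {A : ℕ} {B : ℝ} (hB : (4 * (A : ℝ) ^ 2 + 1) * (A + √2 * vassNorm V) ≤ B)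
    (hπ : IsPath V π) (hthin : IsThin A π u) {i : ℕ} (hi : i < π.length)
    (hS : ¬ (InSquare B (vecAt π u i) ∧ InSquare B (vecAt π u (i + 1)))) :
    ∃ v : Vec2, (0 : Vec2) ≤ v ∧ vnorm v ≤ A ∧ ∃ W' : ℝ, W' ≤ (A : ℝ) ∧
      InBelt (vecAt π u i) v W' ∧ InBelt (vecAt π u (i + 1)) v W' := by
  obtain ⟨v, hv, hvA, W₁, hW₁, hx, hxv⟩ := hthin i hi.le
  obtain ⟨w, hw, hwA, W₂, hW₂, hy, hyw⟩ := hthin (i + 1) hi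
  have hstep := hπ.dist_toE_vecAt_succ_le u hi
  set x := vecAt π u i
  set y := vecAt π u (i + 1)
  have hxv' : distToRay x v ≤ A := hxv.trans hW₁
  have hyw' : distToRay y w ≤ A := hyw.trans hW₂
  by_cases hray : rayE v = rayE w
  · have hyv : distToRay y v ≤ A := by rwa [distToRay, hray]
    exact ⟨v, hv, hvA, A, le_rfl, ⟨hx, hxv'⟩, hy, hyv⟩
  have hD : (A : ℝ) ≤ A + √2 * vassNorm V := le_add_of_nonneg_right (by positivity)
  have hxw : distToRay x w ≤ A + √2 * vassNorm V :=
    (distToRay_le_add_dist x y w).trans (add_le_add hyw' hstep)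
  have hyv : distToRay y v ≤ A + √2 * vassNorm V :=
    (distToRay_le_add_dist y x v).trans (add_le_add hxv' (dist_comm (toE x) _ ▸ hstep))
  have hx_sq := inSquare_of_rayE_ne hx hv hw hvA hwA hray (hxv'.trans hD) hxw
  have hy_sq := inSquare_of_rayE_ne hy hv hw hvA hwA hray hyv (hyw'.trans hD)
  exact absurd ⟨hx_sq.mono hB, hy_sq.mono hB⟩ hS

/-- Thin runs do not change belts far from the origin: for
an `A`-thin run of a 2-VASS `V` with norm `M`, setting `W = A + √2·M`,
`B = 6·W·A² + 3·W` and `S = [0,B]²`, any two consecutive configurations whose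
counter values lie outside `S` share a common `A`-belt. -/
theorem thin_run_belts_stable
    (n : ℕ) (V : VASS n) (π : List (Transition n)) (q : Fin n) (u : Vec2) (A : ℕ)
    (W B : ℝ)
    (hW : W = (A : ℝ) + Real.sqrt 2 * (vassNorm V : ℝ))
    (hB : B = 6 * W * (A : ℝ) ^ 2 + 3 * W)
    (hrun : IsRun V π q u) (hthin : IsThin A π u) :
    ∀ i : ℕ, i + 1 ≤ π.length →
      ¬ InSquare B (vecAt π u i) → ¬ InSquare B (vecAt π u (i + 1)) →
      ∃ v : Vec2, (0 : Vec2) ≤ v ∧ vnorm v ≤ A ∧ ∃ W' : ℝ, W' ≤ (A : ℝ) ∧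
        InBelt (vecAt π u i) v W' ∧ InBelt (vecAt π u (i + 1)) v W' := by
  have hW_nonneg : 0 ≤ W := hW ▸ by positivity
  exact fun i hi hS _ ↦ thin_run_belts_stable_general
    (by rw [← hW, hB]; nlinarith [sq_nonneg (A : ℝ)]) hrun.1 hthin hi (fun h ↦ hS h.1)
end
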